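/- arXiv:2209.11444 — 5 statements merged into one kernel-verified Lean document; each statement's English description precedes it below -/
import Mathlib

section
/- Let q₂* ∈ (0,1) and δ > 0. Then F is Cauchy continuous on Ñ₂((1,q₂*), δ): for every Cauchy sequence (aₘ) contained in Ñ₂((1,q₂*), δ), the sequence (F(aₘ)) is a Cauchy sequence in ℝ. Consequently, F restricted to Ñ₂((1,q₂*), δ) admits a unique continuous extension to the closure of Ñ₂((1,q₂*), δ). -/
/-! The indicator of the quadrant `{v | v.1 < q.1 ∧ v.2 < q.2}` at a point `v` is locally constant
in `q` unless `q` lies on one of the two axis-parallel lines through `v`. When the marginals of `μ`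
have no atoms, a fixed `q` avoids these lines for `μ`-almost every `v`, so by dominated convergence
`F` is continuous on the whole plane. A continuous function on a complete space preserves Cauchy
sequences, and it is itself the continuous extension of its restriction to any set. -/

open Set MeasureTheory

/-- `Ñ₂(a,δ) = {x ∈ (0,1)² : ‖x − a‖ < δ}` with the Euclidean norm on ℝ². -/
def nbhd2 (a : ℝ × ℝ) (δ : ℝ) : Set (ℝ × ℝ) :=
  {x : ℝ × ℝ | x.1 ∈ Set.Ioo (0 : ℝ) 1 ∧ x.2 ∈ Set.Ioo (0 : ℝ) 1 ∧
    Real.sqrt ((x.1 - a.1) ^ 2 + (x.2 - a.2) ^ 2) < δ}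

open Filter Topology

variable {X Y E : Type*}

section SetIntegral

variable [MeasurableSpace X] {μ : Measure X}

theorem tendsto_setIntegral_of_ae_eventually_mem_iff [NormedAddCommGroup E] [NormedSpace ℝ E]
    {ι : Type*} {l : Filter ι} [l.IsCountablyGenerated] {s : ι → Set X} {t : Set X} {f : X → E}
    (hs : ∀ᶠ i in l, MeasurableSet (s i)) (ht : MeasurableSet t) (hf : Integrable f μ)
    (hst : ∀ᵐ x ∂μ, ∀ᶠ i in l, (x ∈ s i ↔ x ∈ t)) :
    Tendsto (fun i => ∫ x in s i, f x ∂μ) l (𝓝 (∫ x in t, f x ∂μ)) := by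
  have h_indicator : Tendsto (fun i => ∫ x, (s i).indicator f x ∂μ) l
      (𝓝 (∫ x, t.indicator f x ∂μ)) := by
    refine tendsto_integral_filter_of_dominated_convergence (fun x => ‖f x‖)
      (hs.mono fun i hi => hf.aestronglyMeasurable.indicator hi)
      (.of_forall fun i => .of_forall fun x => norm_indicator_le_norm_self f x) hf.norm ?_
    filter_upwards [hst] with x hx
    exact tendsto_nhds_of_eventually_eq (hx.mono fun i hi => indicator_eq_indicator hi rfl)
  rw [integral_indicator ht] at h_indicator
  exact h_indicator.congr' (hs.mono fun i hi => integral_indicator hi)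

theorem integral_mul_ite_mul_ite (f : X → ℝ) {p q : X → Prop} [DecidablePred p] [DecidablePred q]
    (hpq : MeasurableSet {x | p x ∧ q x}) :
    ∫ x, f x * (if p x then (1 : ℝ) else 0) * (if q x then (1 : ℝ) else 0) ∂μ =
      ∫ x in {x | p x ∧ q x}, f x ∂μ := by
  rw [← integral_indicator hpq]
  congr with x
  by_cases hp : p x <;> by_cases hq : q x <;> simp [hp, hq]

end SetIntegral

section Marginals

variable [MeasurableSpace X] [MeasurableSpace Y] {μ : Measure (X × Y)} {ν : Measure X}
  {ρ : Measure Y}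

theorem nullSingletonClass_fst_of_absolutelyContinuous_prod [NullSingletonClass ν]
    (h : μ ≪ ν.prod ρ) : NullSingletonClass μ.fst :=
  have h_marginal : μ.fst ≪ ν :=
    (h.map measurable_fst).trans Measure.quasiMeasurePreserving_fst.absolutelyContinuous
  ⟨fun x => h_marginal (measure_singleton x)⟩

theorem nullSingletonClass_snd_of_absolutelyContinuous_prod [NullSingletonClass ρ]
    (h : μ ≪ ν.prod ρ) : NullSingletonClass μ.snd :=
  have h_marginal : μ.snd ≪ ρ :=
    (h.map measurable_snd).trans Measure.quasiMeasurePreserving_snd.absolutelyContinuous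
  ⟨fun x => h_marginal (measure_singleton x)⟩

end Marginals

theorem eventually_lt_iff_lt_of_ne [TopologicalSpace X] [LinearOrder X] [OrderClosedTopology X]
    {a b : X} (h : a ≠ b) : ∀ᶠ x in 𝓝 b, (a < x ↔ a < b) := by
  rcases h.lt_or_gt with hab | hba
  · exact (eventually_gt_nhds hab).mono fun x hx => iff_of_true hx hab
  · exact (eventually_lt_nhds hba).mono fun x hx => iff_of_false hx.not_gt hba.not_gt

theorem continuous_setIntegral_Iio_prod_Iio
    [TopologicalSpace X] [LinearOrder X] [OrderClosedTopology X] [FirstCountableTopology X]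
    [MeasurableSpace X] [OpensMeasurableSpace X]
    [TopologicalSpace Y] [LinearOrder Y] [OrderClosedTopology Y] [FirstCountableTopology Y]
    [MeasurableSpace Y] [OpensMeasurableSpace Y] [NormedAddCommGroup E] [NormedSpace ℝ E]
    {μ : Measure (X × Y)} [NullSingletonClass μ.fst] [NullSingletonClass μ.snd]
    {f : X × Y → E} (hf : Integrable f μ) :
    Continuous fun q : X × Y => ∫ v in Iio q.1 ×ˢ Iio q.2, f v ∂μ := by
  refine continuous_iff_continuousAt.2 fun q => ?_
  have h_fst : ∀ᵐ v ∂μ, v.1 ≠ q.1 :=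
    ae_of_ae_map measurable_fst.aemeasurable (Measure.ae_ne μ.fst q.1)
  have h_snd : ∀ᵐ v ∂μ, v.2 ≠ q.2 :=
    ae_of_ae_map measurable_snd.aemeasurable (Measure.ae_ne μ.snd q.2)
  have h_meas (p : X × Y) : MeasurableSet (Iio p.1 ×ˢ Iio p.2) :=
    measurableSet_Iio.prod measurableSet_Iio
  refine tendsto_setIntegral_of_ae_eventually_mem_iff (.of_forall h_meas) (h_meas q) hf ?_
  filter_upwards [h_fst, h_snd] with v hv₁ hv₂
  filter_upwards [continuousAt_fst.eventually (eventually_lt_iff_lt_of_ne hv₁),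
    continuousAt_snd.eventually (eventually_lt_iff_lt_of_ne hv₂)] with p hp₁ hp₂
  exact and_congr hp₁ hp₂

theorem cauchy_map_of_continuous [UniformSpace X] [CompleteSpace X] [UniformSpace Y] {f : X → Y}
    (hf : Continuous f) {l : Filter X} (hl : Cauchy l) : Cauchy (map f l) := by
  obtain ⟨x, hx⟩ := CompleteSpace.complete hl
  have : l.NeBot := hl.1
  exact cauchy_nhds.mono ((map_mono hx).trans (hf.tendsto x))

theorem stmt2_general
    [UniformSpace X] [CompleteSpace X] [LinearOrder X] [OrderClosedTopology X]
    [FirstCountableTopology X] [MeasurableSpace X] [OpensMeasurableSpace X]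
    [UniformSpace Y] [CompleteSpace Y] [LinearOrder Y] [OrderClosedTopology Y]
    [FirstCountableTopology Y] [MeasurableSpace Y] [OpensMeasurableSpace Y]
    [NormedAddCommGroup E] [NormedSpace ℝ E] [CompleteSpace E]
    {μ : Measure (X × Y)} (h_fst : NullSingletonClass μ.fst) (h_snd : NullSingletonClass μ.snd)
    {m : X × Y → E} (hm : Integrable m μ) {F : X × Y → E}
    (hF : ∀ q : X × Y, F q = ∫ v in Iio q.1 ×ˢ Iio q.2, m v ∂μ) (N : Set (X × Y)) :
    (∀ a : ℕ → X × Y, (∀ n, a n ∈ N) → CauchySeq a → CauchySeq (fun n => F (a n))) ∧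
    (∃ fbar : X × Y → E,
      ContinuousOn fbar (closure N) ∧
      (∀ x ∈ N, fbar x = F x) ∧
      ∀ g : X × Y → E, ContinuousOn g (closure N) → (∀ x ∈ N, g x = F x) →
        ∀ x ∈ closure N, g x = fbar x) := by
  have hF_cont : Continuous F := by
    rw [funext hF]
    exact continuous_setIntegral_Iio_prod_Iio hm
  refine ⟨fun a _ ha => cauchy_map_of_continuous hF_cont ha,
    F, hF_cont.continuousOn, fun _ _ => rfl, fun g hg hgF => ?_⟩
  exact EqOn.of_subset_closure hgF hg hF_cont.continuousOn subset_closure subset_rfl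

/-- With `μ` a probability measure on ℝ² absolutely continuous
w.r.t. Lebesgue measure and supported in `[0,1]²`, `m` μ-integrable, and
`F(q₁,q₂) = ∫ m(v)·𝟙{v₁<q₁}·𝟙{v₂<q₂} dμ`, for `q₂* ∈ (0,1)` and `δ > 0`:
`F` is Cauchy continuous on `Ñ₂((1,q₂*),δ)`, and hence admits a unique
continuous extension to the closure of `Ñ₂((1,q₂*),δ)`. -/
theorem stmt2 (μ : Measure (ℝ × ℝ)) [IsProbabilityMeasure μ]
    (habs : μ ≪ volume)
    (hsupp : μ ((Set.Icc (0 : ℝ) 1 ×ˢ Set.Icc (0 : ℝ) 1)ᶜ) = 0)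
    (m : ℝ × ℝ → ℝ) (hm : Integrable m μ)
    (F : ℝ × ℝ → ℝ)
    (hF : ∀ q : ℝ × ℝ, F q =
      ∫ v, m v * (if v.1 < q.1 then (1 : ℝ) else 0) *
        (if v.2 < q.2 then (1 : ℝ) else 0) ∂μ)
    (q₂star δ : ℝ) (hq : q₂star ∈ Set.Ioo (0 : ℝ) 1) (hδ : 0 < δ) :
    (∀ a : ℕ → ℝ × ℝ, (∀ n, a n ∈ nbhd2 (1, q₂star) δ) → CauchySeq a →
      CauchySeq (fun n => F (a n))) ∧
    (∃ fbar : ℝ × ℝ → ℝ,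
      ContinuousOn fbar (closure (nbhd2 (1, q₂star) δ)) ∧
      (∀ x ∈ nbhd2 (1, q₂star) δ, fbar x = F x) ∧
      ∀ g : ℝ × ℝ → ℝ, ContinuousOn g (closure (nbhd2 (1, q₂star) δ)) →
        (∀ x ∈ nbhd2 (1, q₂star) δ, g x = F x) →
        ∀ x ∈ closure (nbhd2 (1, q₂star) δ), g x = fbar x) := by
  exact stmt2_general (nullSingletonClass_fst_of_absolutelyContinuous_prod habs)
    (nullSingletonClass_snd_of_absolutelyContinuous_prod habs) hm
    (fun q => (hF q).trans
      (integral_mul_ite_mul_ite m (measurableSet_Iio.prod measurableSet_Iio))) _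
end

section
/- Let q₂* ∈ (0,1) and let 0 < δ < min(q₂*, 1−q₂*). Then G is Cauchy continuous on Ñ₂((1,q₂*), δ): for every Cauchy sequence (bₘ) contained in Ñ₂((1,q₂*), δ), the sequence (G(bₘ)) is a Cauchy sequence in ℝ. Consequently, G restricted to Ñ₂((1,q₂*), δ) admits a unique continuous extension to the closure of Ñ₂((1,q₂*), δ). -/
open Set MeasureTheory

/-!
For `v₁, q₁ ∈ (0,1)`, the inequality `v₁ < φ(ψ⁻¹(v₂) − ψ⁻¹(q₂) + φ⁻¹(q₁))` solved for `q₁` reads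
`φ(φ⁻¹(v₁) − ψ⁻¹(v₂) + ψ⁻¹(q₂)) < q₁`. The left-hand side no longer involves `φ⁻¹(q₁)`, so the
integral defining `G` makes sense for every real `q₁`. Its integrand jumps only where
`v₁ = φ(φ⁻¹(q₁) + ψ⁻¹(v₂) − ψ⁻¹(q₂))` or `v₂ = q₂`, and both curves are Lebesgue null. By dominated
convergence the integral is continuous on `ℝ × (0,1)`, which contains the closure of the
neighbourhood `Ñ₂((1,q₂*),δ)`.
-/

open Filter Topology Function

lemma isOpenEmbedding_of_strictMono {α β : Type*} [LinearOrder α] [LinearOrder β]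
    [TopologicalSpace α] [OrderTopology α] [TopologicalSpace β] [OrderTopology β] {f : α → β}
    (hf : StrictMono f) (hconn : OrdConnected (range f)) (hopen : IsOpen (range f)) :
    IsOpenEmbedding f :=
  ⟨hf.isEmbedding_of_ordConnected hconn, hopen⟩

lemma lt_apply_add_leftInverse_iff {α β : Type*} [AddCommGroup α] [LinearOrder α]
    [IsOrderedAddMonoid α] [Preorder β] {f : α → β} {g : β → α} (hf : StrictMono f)
    (hgf : LeftInverse g f) {x y : β} (hx : x ∈ range f) (hy : y ∈ range f) (c : α) :
    x < f (c + g y) ↔ f (g x - c) < y := by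
  obtain ⟨a, rfl⟩ := hx
  obtain ⟨b, rfl⟩ := hy
  rw [hgf, hgf, hf.lt_iff_lt, hf.lt_iff_lt, sub_lt_iff_lt_add']

lemma eventually_lt_iff_of_ne {X α : Type*} [TopologicalSpace X] [LinearOrder α]
    [TopologicalSpace α] [OrderClosedTopology α] {f g : X → α} {x₀ : X}
    (hf : ContinuousAt f x₀) (hg : ContinuousAt g x₀) (hne : f x₀ ≠ g x₀) :
    ∀ᶠ x in 𝓝 x₀, (f x < g x ↔ f x₀ < g x₀) := by
  rcases hne.lt_or_gt with hlt | hgt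
  · filter_upwards [hf.eventually_lt hg hlt] with x hx using iff_of_true hx hlt
  · filter_upwards [hg.eventually_lt hf hgt] with x hx using iff_of_false hx.not_gt hgt.not_gt

lemma cauchySeq_comp_of_continuousOn_closure {X Y : Type*} [UniformSpace X] [CompleteSpace X]
    [UniformSpace Y] {f : X → Y} {s : Set X} (hf : ContinuousOn f (closure s)) {b : ℕ → X}
    (hbs : ∀ n, b n ∈ s) (hb : CauchySeq b) : CauchySeq fun n => f (b n) := by
  obtain ⟨c, hc⟩ := cauchySeq_tendsto_of_complete hb
  have hc_mem : c ∈ closure s := mem_closure_of_tendsto hc (.of_forall hbs)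
  have hc_within : Tendsto b atTop (𝓝[closure s] c) :=
    tendsto_nhdsWithin_iff.2 ⟨hc, .of_forall fun n => subset_closure (hbs n)⟩
  exact ((hf c hc_mem).tendsto.comp hc_within).cauchySeq

lemma continuousAt_setIntegral {α X E : Type*} [MeasurableSpace α] {μ : Measure α}
    [TopologicalSpace X] [FirstCountableTopology X] [NormedAddCommGroup E] [NormedSpace ℝ E]
    {f : α → E} (hf : Integrable f μ) {S : X → Set α} (hS : ∀ x, NullMeasurableSet (S x) μ)
    {x₀ : X} (hlim : ∀ᵐ a ∂μ, ∀ᶠ x in 𝓝 x₀, (a ∈ S x ↔ a ∈ S x₀)) :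
    ContinuousAt (fun x => ∫ a in S x, f a ∂μ) x₀ := by
  simp_rw [← integral_indicator₀ (hS _)]
  refine continuousAt_of_dominated (bound := fun a => ‖f a‖)
    (.of_forall fun x => hf.aestronglyMeasurable.indicator₀ (hS x))
    (.of_forall fun x => .of_forall fun a => norm_indicator_le_norm_self f a) hf.norm ?_
  filter_upwards [hlim] with a ha
  refine (continuousAt_const (y := (S x₀).indicator f a)).congr ?_
  filter_upwards [ha] with x hx
  by_cases h : a ∈ S x₀ <;> simp [h, hx]

lemma ae_prod_fst_ne {α β : Type*} [MeasurableSpace α] [MeasurableSpace β] [MeasurableEq α]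
    {μ : Measure α} {ν : Measure β} [SFinite μ] [SFinite ν] [NullSingletonClass μ] {f : β → α}
    (hf : AEMeasurable f ν) : ∀ᵐ v ∂μ.prod ν, v.1 ≠ f v.2 := by
  have hgraph : ∀ᵐ v ∂μ.prod ν, v.1 ≠ hf.mk f v.2 := by
    have hmeas : MeasurableSet {v : α × β | v.1 = hf.mk f v.2} :=
      measurableSet_eq_fun measurable_fst (hf.measurable_mk.comp measurable_snd)
    rw [ae_iff]
    simp only [ne_eq, not_not]
    rw [Measure.prod_apply_symm hmeas]
    simp [preimage]
  filter_upwards [hgraph, Measure.quasiMeasurePreserving_snd.ae hf.ae_eq_mk] with v hv hfv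
  rwa [hfv]

lemma absolutelyContinuous_prod_restrict_Ioo {μ : Measure (ℝ × ℝ)} (habs : μ ≪ volume)
    {a b c d : ℝ} (hsupp : μ (Icc a b ×ˢ Icc c d)ᶜ = 0) :
    μ ≪ (volume.restrict (Ioo a b)).prod (volume.restrict (Ioo c d)) := by
  have hμ : μ.restrict (Icc a b ×ˢ Icc c d) = μ := Measure.restrict_eq_self_of_ae_mem hsupp
  rw [Measure.restrict_congr_set Ioo_ae_eq_Icc, Measure.restrict_congr_set Ioo_ae_eq_Icc,
    Measure.prod_restrict, ← Measure.volume_eq_prod, ← hμ]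
  exact habs.restrict _

/-- The set of `v` with `v₁ < φ(ψ⁻¹(v₂) − ψ⁻¹(q₂) + φ⁻¹(q₁))` and `q₂ ≤ v₂`, over which `G(q₁,q₂)`
integrates `m`. The first inequality is solved for `q₁`, which extends the definition from
`q₁ ∈ (0,1)` to all real `q₁`. -/
def integrationRegion (φ φinv ψinv : ℝ → ℝ) (q : ℝ × ℝ) : Set (ℝ × ℝ) :=
  {v | φ (φinv v.1 - ψinv v.2 + ψinv q.2) < q.1 ∧ q.2 ≤ v.2}

section IntegrationRegion

variable {μ : Measure (ℝ × ℝ)} {φ φinv ψinv : ℝ → ℝ}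

lemma mem_integrationRegion_iff (hφm : StrictMono φ) (hφrange : range φ = Ioo 0 1)
    (hφinv : LeftInverse φinv φ) {q v : ℝ × ℝ} (hq : q.1 ∈ Ioo 0 1) (hv : v.1 ∈ Ioo 0 1) :
    v ∈ integrationRegion φ φinv ψinv q ↔
      v.1 < φ (ψinv v.2 - ψinv q.2 + φinv q.1) ∧ q.2 ≤ v.2 := by
  rw [← hφrange] at hq hv
  rw [lt_apply_add_leftInverse_iff hφm hφinv hv hq, ← sub_add]
  rfl

lemma nullMeasurableSet_integrationRegion
    (hμ : μ ≪ (volume.restrict (Ioo 0 1)).prod (volume.restrict (Ioo 0 1)))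
    (hφc : Continuous φ) (hφinvc : ContinuousOn φinv (Ioo 0 1))
    (hψinvc : ContinuousOn ψinv (Ioo 0 1)) (q : ℝ × ℝ) :
    NullMeasurableSet (integrationRegion φ φinv ψinv q) μ := by
  have hφinv_fst := (hφinvc.aemeasurable measurableSet_Ioo (μ := volume)).comp_fst
    (ν := volume.restrict (Ioo 0 1)) |>.mono_ac hμ
  have hψinv_snd := (hψinvc.aemeasurable measurableSet_Ioo (μ := volume)).comp_snd
    (μ := volume.restrict (Ioo 0 1)) |>.mono_ac hμ
  have hthreshold : AEMeasurable (fun v : ℝ × ℝ => φ (φinv v.1 - ψinv v.2 + ψinv q.2)) μ :=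
    hφc.measurable.comp_aemeasurable ((hφinv_fst.sub hψinv_snd).add_const _)
  exact (nullMeasurableSet_lt hthreshold aemeasurable_const).inter
    (measurableSet_le measurable_const measurable_snd).nullMeasurableSet

lemma ae_apply_leftInverse_sub_add_ne
    (hμ : μ ≪ (volume.restrict (Ioo 0 1)).prod (volume.restrict (Ioo 0 1)))
    (hφc : Continuous φ) (hφrange : range φ = Ioo 0 1) (hφinv : LeftInverse φinv φ)
    (hψinvc : ContinuousOn ψinv (Ioo 0 1)) (c t : ℝ) :
    ∀ᵐ v ∂μ, φ (φinv v.1 - ψinv v.2 + c) ≠ t := by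
  have hgraph : AEMeasurable (fun y => φ (φinv t - c + ψinv y)) (volume.restrict (Ioo 0 1)) :=
    hφc.measurable.comp_aemeasurable ((hψinvc.aemeasurable measurableSet_Ioo).const_add _)
  filter_upwards [hμ.ae_le (ae_prod_fst_ne hgraph),
    hμ.ae_le (Measure.quasiMeasurePreserving_fst.ae (ae_restrict_mem measurableSet_Ioo))]
    with v hne hv ht
  rw [← hφrange] at hv
  obtain ⟨x, hx⟩ := hv
  rw [← hx, hφinv] at ht
  rw [← hx, ← ht, hφinv] at hne
  exact hne (by ring_nf)

lemma ae_eventually_mem_integrationRegion_iff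
    (hμ : μ ≪ (volume.restrict (Ioo 0 1)).prod (volume.restrict (Ioo 0 1)))
    (hφc : Continuous φ) (hφrange : range φ = Ioo 0 1) (hφinv : LeftInverse φinv φ)
    (hψinvc : ContinuousOn ψinv (Ioo 0 1)) {q : ℝ × ℝ} (hq : q.2 ∈ Ioo 0 1) :
    ∀ᵐ v ∂μ, ∀ᶠ p in 𝓝 q,
      (v ∈ integrationRegion φ φinv ψinv p ↔ v ∈ integrationRegion φ φinv ψinv q) := by
  have hψinv_snd : ContinuousAt (fun p : ℝ × ℝ => ψinv p.2) q :=
    (hψinvc.continuousAt (isOpen_Ioo.mem_nhds hq)).comp continuousAt_snd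
  filter_upwards [ae_apply_leftInverse_sub_add_ne hμ hφc hφrange hφinv hψinvc (ψinv q.2) q.1,
    hμ.ae_le (Measure.quasiMeasurePreserving_snd.ae (Measure.ae_ne _ q.2))] with v hne₁ hne₂
  have hfst := eventually_lt_iff_of_ne
    (hφc.continuousAt.comp (continuousAt_const.add hψinv_snd)) continuousAt_fst hne₁
  have hsnd := eventually_lt_iff_of_ne continuousAt_const continuousAt_snd hne₂
  filter_upwards [hfst, hsnd] with p hp₁ hp₂
  exact and_congr hp₁ (by simpa only [not_lt] using not_congr hp₂)

lemma continuousOn_setIntegral_integrationRegion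
    (hμ : μ ≪ (volume.restrict (Ioo 0 1)).prod (volume.restrict (Ioo 0 1)))
    {m : ℝ × ℝ → ℝ} (hm : Integrable m μ) (hφc : Continuous φ) (hφrange : range φ = Ioo 0 1)
    (hφinv : LeftInverse φinv φ) (hφinvc : ContinuousOn φinv (Ioo 0 1))
    (hψinvc : ContinuousOn ψinv (Ioo 0 1)) :
    ContinuousOn (fun q => ∫ v in integrationRegion φ φinv ψinv q, m v ∂μ)
      (Prod.snd ⁻¹' Ioo 0 1) := fun _ hq =>
  (continuousAt_setIntegral hm
    (nullMeasurableSet_integrationRegion hμ hφc hφinvc hψinvc)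
    (ae_eventually_mem_integrationRegion_iff hμ hφc hφrange hφinv hψinvc hq)).continuousWithinAt

lemma setIntegral_integrationRegion
    (hμ : μ ≪ (volume.restrict (Ioo 0 1)).prod (volume.restrict (Ioo 0 1)))
    (m : ℝ × ℝ → ℝ) (hφm : StrictMono φ) (hφc : Continuous φ) (hφrange : range φ = Ioo 0 1)
    (hφinv : LeftInverse φinv φ) (hφinvc : ContinuousOn φinv (Ioo 0 1))
    (hψinvc : ContinuousOn ψinv (Ioo 0 1)) {q : ℝ × ℝ} (hq : q.1 ∈ Ioo 0 1) :
    ∫ v in integrationRegion φ φinv ψinv q, m v ∂μ =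
      ∫ v, m v * (if v.1 < φ (ψinv v.2 - ψinv q.2 + φinv q.1) then (1 : ℝ) else 0) *
        (if q.2 ≤ v.2 then (1 : ℝ) else 0) ∂μ := by
  classical
  rw [← integral_indicator₀ (nullMeasurableSet_integrationRegion hμ hφc hφinvc hψinvc q)]
  refine integral_congr_ae ?_
  filter_upwards [hμ.ae_le
    (Measure.quasiMeasurePreserving_fst.ae (ae_restrict_mem measurableSet_Ioo))] with v hv
  simp only [indicator_apply, mem_integrationRegion_iff hφm hφrange hφinv hq hv, ite_and,
    mul_ite, mul_one, mul_zero]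
  split_ifs <;> rfl

end IntegrationRegion

lemma mapsTo_snd_closure_nbhd2 {a : ℝ × ℝ} {δ : ℝ} (hδ : δ < min a.2 (1 - a.2)) :
    MapsTo Prod.snd (closure (nbhd2 a δ)) (Ioo 0 1) := by
  have hsub : nbhd2 a δ ⊆ Prod.snd ⁻¹' Icc (a.2 - δ) (a.2 + δ) := by
    rintro x ⟨-, -, hx⟩
    have hdist : |x.2 - a.2| < δ :=
      (Real.abs_le_sqrt (le_add_of_nonneg_left (sq_nonneg _))).trans_lt hx
    rw [abs_lt] at hdist
    exact ⟨by linarith, by linarith⟩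
  obtain ⟨hδ₀, hδ₁⟩ := lt_min_iff.1 hδ
  intro x hx
  obtain ⟨hlower, hupper⟩ :=
    closure_minimal hsub (isClosed_Icc.preimage continuous_snd) hx
  exact ⟨by linarith, by linarith⟩

theorem stmt3_general {μ : Measure (ℝ × ℝ)} (habs : μ ≪ volume)
    (hsupp : μ ((Icc (0 : ℝ) 1 ×ˢ Icc (0 : ℝ) 1)ᶜ) = 0) {m : ℝ × ℝ → ℝ} (hm : Integrable m μ)
    {φ φinv ψinv : ℝ → ℝ} (hφm : StrictMono φ) (hφrange : range φ = Ioo 0 1)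
    (hφinv : LeftInverse φinv φ) (hψinvc : ContinuousOn ψinv (Ioo 0 1)) {G : ℝ × ℝ → ℝ}
    (hG : ∀ q : ℝ × ℝ, q.1 ∈ Ioo (0 : ℝ) 1 → q.2 ∈ Ioo (0 : ℝ) 1 →
      G q = ∫ v, m v *
        (if v.1 < φ (ψinv v.2 - ψinv q.2 + φinv q.1) then (1 : ℝ) else 0) *
        (if q.2 ≤ v.2 then (1 : ℝ) else 0) ∂μ)
    {s : Set (ℝ × ℝ)} (hs : s ⊆ Ioo 0 1 ×ˢ Ioo 0 1) (hcl : MapsTo Prod.snd (closure s) (Ioo 0 1)) :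
    (∀ b : ℕ → ℝ × ℝ, (∀ n, b n ∈ s) → CauchySeq b → CauchySeq (fun n => G (b n))) ∧
    (∃ gbar : ℝ × ℝ → ℝ, ContinuousOn gbar (closure s) ∧ (∀ x ∈ s, gbar x = G x) ∧
      ∀ g : ℝ × ℝ → ℝ, ContinuousOn g (closure s) → (∀ x ∈ s, g x = G x) →
        ∀ x ∈ closure s, g x = gbar x) := by
  have hμ := absolutelyContinuous_prod_restrict_Ioo habs hsupp
  have hφ := isOpenEmbedding_of_strictMono hφm (hφrange ▸ ordConnected_Ioo) (hφrange ▸ isOpen_Ioo)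
  have hφinvc : ContinuousOn φinv (Ioo 0 1) :=
    hφrange ▸ hφ.isOpenMap.continuousOn_range_of_leftInverse hφinv
  let gbar q := ∫ v in integrationRegion φ φinv ψinv q, m v ∂μ
  have hcont : ContinuousOn gbar (closure s) :=
    (continuousOn_setIntegral_integrationRegion hμ hm hφ.continuous hφrange hφinv hφinvc
      hψinvc).mono hcl
  have hgbar : EqOn gbar G s := fun q hq =>
    (setIntegral_integrationRegion hμ m hφm hφ.continuous hφrange hφinv hφinvc hψinvc
      (hs hq).1).trans (hG q (hs hq).1 (hs hq).2).symm
  refine ⟨fun b hbs hb => ?_, gbar, hcont, hgbar, fun g hg hgG => ?_⟩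
  · simpa only [hgbar (hbs _)] using cauchySeq_comp_of_continuousOn_closure hcont hbs hb
  · exact EqOn.of_subset_closure (EqOn.trans hgG hgbar.symm) hg hcont subset_closure Subset.rfl

/-- With `μ` a probability measure on ℝ² absolutely continuous
w.r.t. Lebesgue measure and supported in `[0,1]²`, `m` μ-integrable, `φ, ψ`
continuous strictly increasing bijections from ℝ onto `(0,1)` with inverses
`φinv, ψinv` on `(0,1)`, and
`G(q₁,q₂) = ∫ m(v)·𝟙{v₁ < φ(ψ⁻¹(v₂) − ψ⁻¹(q₂) + φ⁻¹(q₁))}·𝟙{q₂ ≤ v₂} dμ`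
for `(q₁,q₂) ∈ (0,1)²`: for `q₂* ∈ (0,1)` and `0 < δ < min(q₂*, 1−q₂*)`,
`G` is Cauchy continuous on `Ñ₂((1,q₂*),δ)` and hence admits a unique
continuous extension to the closure of `Ñ₂((1,q₂*),δ)`. -/
theorem stmt3 (μ : Measure (ℝ × ℝ)) [IsProbabilityMeasure μ]
    (habs : μ ≪ volume)
    (hsupp : μ ((Set.Icc (0 : ℝ) 1 ×ˢ Set.Icc (0 : ℝ) 1)ᶜ) = 0)
    (m : ℝ × ℝ → ℝ) (hm : Integrable m μ)
    (φ ψ φinv ψinv : ℝ → ℝ)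
    (hφc : Continuous φ) (hφm : StrictMono φ)
    (hφrange : Set.range φ = Set.Ioo (0 : ℝ) 1)
    (hφinv : ∀ x : ℝ, φinv (φ x) = x)
    (hψc : Continuous ψ) (hψm : StrictMono ψ)
    (hψrange : Set.range ψ = Set.Ioo (0 : ℝ) 1)
    (hψinv : ∀ x : ℝ, ψinv (ψ x) = x)
    (G : ℝ × ℝ → ℝ)
    (hG : ∀ q : ℝ × ℝ, q.1 ∈ Set.Ioo (0 : ℝ) 1 → q.2 ∈ Set.Ioo (0 : ℝ) 1 →
      G q = ∫ v, m v *
        (if v.1 < φ (ψinv v.2 - ψinv q.2 + φinv q.1) then (1 : ℝ) else 0) *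
        (if q.2 ≤ v.2 then (1 : ℝ) else 0) ∂μ)
    (q₂star δ : ℝ) (hq : q₂star ∈ Set.Ioo (0 : ℝ) 1)
    (hδ : 0 < δ) (hδ' : δ < min q₂star (1 - q₂star)) :
    (∀ b : ℕ → ℝ × ℝ, (∀ n, b n ∈ nbhd2 (1, q₂star) δ) → CauchySeq b →
      CauchySeq (fun n => G (b n))) ∧
    (∃ gbar : ℝ × ℝ → ℝ,
      ContinuousOn gbar (closure (nbhd2 (1, q₂star) δ)) ∧
      (∀ x ∈ nbhd2 (1, q₂star) δ, gbar x = G x) ∧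
      ∀ g : ℝ × ℝ → ℝ, ContinuousOn g (closure (nbhd2 (1, q₂star) δ)) →
        (∀ x ∈ nbhd2 (1, q₂star) δ, g x = G x) →
        ∀ x ∈ closure (nbhd2 (1, q₂star) δ), g x = gbar x) := by
  have hψ := isOpenEmbedding_of_strictMono hψm (hψrange ▸ ordConnected_Ioo) (hψrange ▸ isOpen_Ioo)
  exact stmt3_general habs hsupp hm hφm hφrange hφinv
    (hψrange ▸ hψ.isOpenMap.continuousOn_range_of_leftInverse hψinv) hG
    (fun _ hx => ⟨hx.1, hx.2.1⟩) (mapsTo_snd_closure_nbhd2 hδ')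
end

section
/- Let q₁* ∈ (0,1). Then: (i) for every t ∈ (0,1), G₀(t, q₂) converges to Φ₀(t) := ∫ m(v)·𝟙{t ≤ v₁} dμ(v) as q₂ → 1 from the left; and (ii) if g₀ : ℝ → ℝ is integrable on (0,1), continuous at q₁*, and satisfies Φ₀(t) = ∫ₜ¹ g₀(s) ds for every t ∈ [0,1], then Φ₀ is differentiable at q₁* with Φ₀′(q₁*) = −g₀(q₁*). (Thus minus the q₁-partial derivative at (q₁*,1) of the continuous extension of G₀ identifies the conditional expectation E[G(Y₀) | V₁ = q₁*] = g₀(q₁*).) -/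
open Set MeasureTheory

/-! Fix `q₁ = t`. Since `φ` is increasing, the second indicator in `G₀(t, q₂)` is implied by the
first as soon as `ψ⁻¹(v₂) ≤ ψ⁻¹(q₂)`, in particular once `v₂ ≤ q₂`. As `v₂ < 1` almost surely, the
integrand is therefore eventually constant in `q₂` at almost every `v`, and dominated convergence
with bound `|m|` gives the limit `Φ₀(t)`. The derivative of `Φ₀` is then the fundamental theorem of
calculus at the lower endpoint. -/

open Filter Topology

theorem indicator_setOf_eq_mul_ite {α R : Type*} [MulZeroOneClass R] (p : α → Prop)
    [DecidablePred p] (f : α → R) (a : α) :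
    {a | p a}.indicator f a = f a * if p a then 1 else 0 := by
  simp only [indicator_apply, mem_ofPred_eq, mul_ite, mul_one, mul_zero]

section Measure

variable {α : Type*} [MeasurableSpace α] {E : Type*} [NormedAddCommGroup E] [NormedSpace ℝ E]

theorem ae_snd_mem_Ioo_of_absolutelyContinuous_prod {β : Type*} [MeasurableSpace β]
    [PartialOrder β] {μ : Measure (α × β)} {ν : Measure α} {ρ : Measure β} [NullSingletonClass ρ]
    (hμ : μ ≪ ν.prod ρ) {a b : β} (h : ∀ᵐ v ∂μ, v.2 ∈ Icc a b) :
    ∀ᵐ v ∂μ, v.2 ∈ Ioo a b := by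
  have hiff : ∀ᵐ v ∂μ, v.2 ∈ Ioo a b ↔ v.2 ∈ Icc a b :=
    hμ.ae_le (Measure.quasiMeasurePreserving_snd.ae (Ioo_ae_eq_Icc (μ := ρ)).mem_iff)
  filter_upwards [h, hiff] with v hv hv' using hv'.2 hv

theorem aemeasurable_comp_of_monotoneOn {β γ : Type*} [TopologicalSpace β] [MeasurableSpace β]
    [BorelSpace β] [LinearOrder β] [OrderClosedTopology β] [TopologicalSpace γ] [MeasurableSpace γ]
    [BorelSpace γ] [LinearOrder γ] [OrderTopology γ] [SecondCountableTopology γ] {μ : Measure α}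
    {f : β → γ} {s : Set β} {X : α → β} (hs : MeasurableSet s) (hf : MonotoneOn f s)
    (hX : AEMeasurable X μ) (hXs : ∀ᵐ a ∂μ, X a ∈ s) : AEMeasurable (fun a => f (X a)) μ := by
  have hmap : (μ.map X).restrict s = μ.map X :=
    Measure.restrict_eq_self_of_ae_mem ((ae_map_iff hX hs).2 hXs)
  have hfX : AEMeasurable f (μ.map X) := hmap ▸ aemeasurable_restrict_of_monotoneOn hs hf
  exact hfX.comp_aemeasurable hX

theorem tendsto_integral_indicator_of_eventually_mem_iff {μ : Measure α} {ι : Type*}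
    {l : Filter ι} [l.IsCountablyGenerated] {f : α → E} {S : ι → Set α} {s : Set α}
    (hf : Integrable f μ) (hS : ∀ᶠ i in l, NullMeasurableSet (S i) μ)
    (hs : ∀ᵐ a ∂μ, ∀ᶠ i in l, (a ∈ S i ↔ a ∈ s)) :
    Tendsto (fun i => ∫ a, (S i).indicator f a ∂μ) l (𝓝 (∫ a, s.indicator f a ∂μ)) := by
  refine tendsto_integral_filter_of_dominated_convergence (fun a => ‖f a‖)
    (hS.mono fun i hi => hf.aestronglyMeasurable.indicator₀ hi)
    (.of_forall fun i => .of_forall fun a => norm_indicator_le_norm_self f a) hf.norm ?_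
  filter_upwards [hs] with a ha
  refine tendsto_const_nhds.congr' ?_
  filter_upwards [ha] with i hi using indicator_eq_indicator hi.symm rfl

theorem hasDerivAt_integral_left_of_mem_Ioo [CompleteSpace E] {g : ℝ → E} {a b x : ℝ}
    (hg : IntegrableOn g (Ioo a b)) (hx : x ∈ Ioo a b) (hc : ContinuousAt g x) :
    HasDerivAt (fun t => ∫ s in t..b, g s) (-(g x)) x := by
  refine intervalIntegral.integral_hasDerivAt_left ?_
    ⟨Ioo a b, Ioo_mem_nhds hx.1 hx.2, hg.aestronglyMeasurable⟩ hc
  rw [intervalIntegrable_iff_integrableOn_Ioo_of_le hx.2.le]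
  exact hg.mono_set (Ioo_subset_Ioo_left hx.1.le)

end Measure

/-- The event `D₀ = (1 - S₁)(1 - S₃) = 1` in the space of the unobserved heterogeneity
`v = (v₁, v₂)`, at the thresholds `q = (q₁, q₂)`. The inverses `φ⁻¹` and `ψ⁻¹` enter as independent
functions `φinv` and `ψinv`. -/
def untreatedRegion (φ φinv ψinv : ℝ → ℝ) (q : ℝ × ℝ) : Set (ℝ × ℝ) :=
  {v | q.1 ≤ v.1 ∧ φ (ψinv v.2 - ψinv q.2 + φinv q.1) ≤ v.1}

section UntreatedRegion

variable {φ φinv ψinv : ℝ → ℝ} {μ : Measure (ℝ × ℝ)}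

theorem indicator_untreatedRegion (q v : ℝ × ℝ) (m : ℝ × ℝ → ℝ) :
    (untreatedRegion φ φinv ψinv q).indicator m v =
      m v * (if q.1 ≤ v.1 then (1 : ℝ) else 0) *
        (if φ (ψinv v.2 - ψinv q.2 + φinv q.1) ≤ v.1 then (1 : ℝ) else 0) := by
  rw [untreatedRegion, indicator_setOf_eq_mul_ite, mul_assoc, ite_zero_mul_ite_zero, one_mul]

theorem mem_untreatedRegion_iff_of_le {q v : ℝ × ℝ} (hφ : Monotone φ)
    (hφinv : φ (φinv q.1) = q.1) (hψinv : ψinv v.2 ≤ ψinv q.2) :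
    v ∈ untreatedRegion φ φinv ψinv q ↔ q.1 ≤ v.1 := by
  have hthreshold : φ (ψinv v.2 - ψinv q.2 + φinv q.1) ≤ q.1 := calc
    φ (ψinv v.2 - ψinv q.2 + φinv q.1) ≤ φ (φinv q.1) := hφ (by linarith)
    _ = q.1 := hφinv
  exact ⟨And.left, fun h => ⟨h, hthreshold.trans h⟩⟩

theorem nullMeasurableSet_untreatedRegion (hφ : Measurable φ)
    (hψinv : AEMeasurable (fun v : ℝ × ℝ => ψinv v.2) μ) (q : ℝ × ℝ) :
    NullMeasurableSet (untreatedRegion φ φinv ψinv q) μ := by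
  have hfst : AEMeasurable (fun v : ℝ × ℝ => v.1) μ := measurable_fst.aemeasurable
  exact (nullMeasurableSet_le aemeasurable_const hfst).inter
    (nullMeasurableSet_le (hφ.comp_aemeasurable ((hψinv.sub_const _).add_const _)) hfst)

theorem eventually_mem_untreatedRegion_iff {t : ℝ} {v : ℝ × ℝ} (hφ : Monotone φ)
    (hφinv : φ (φinv t) = t) (hψinv : MonotoneOn ψinv (Ioo 0 1)) (hv : v.2 ∈ Ioo (0 : ℝ) 1) :
    ∀ᶠ q₂ in 𝓝[<] (1 : ℝ), (v ∈ untreatedRegion φ φinv ψinv (t, q₂) ↔ t ≤ v.1) := by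
  filter_upwards [Ioo_mem_nhdsLT hv.2] with q₂ hq₂
  exact mem_untreatedRegion_iff_of_le hφ hφinv
    (hψinv hv ⟨hv.1.trans hq₂.1, hq₂.2⟩ hq₂.1.le)

theorem tendsto_integral_indicator_untreatedRegion {E : Type*} [NormedAddCommGroup E]
    [NormedSpace ℝ E] {m : ℝ × ℝ → E} {t : ℝ} (hμ : ∀ᵐ v ∂μ, v.2 ∈ Ioo (0 : ℝ) 1)
    (hm : Integrable m μ) (hφ : Monotone φ) (hφinv : φ (φinv t) = t)
    (hψinv : MonotoneOn ψinv (Ioo 0 1)) :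
    Tendsto (fun q₂ => ∫ v, (untreatedRegion φ φinv ψinv (t, q₂)).indicator m v ∂μ) (𝓝[<] 1)
      (𝓝 (∫ v, {v : ℝ × ℝ | t ≤ v.1}.indicator m v ∂μ)) := by
  have hψinv_snd : AEMeasurable (fun v : ℝ × ℝ => ψinv v.2) μ :=
    aemeasurable_comp_of_monotoneOn measurableSet_Ioo hψinv measurable_snd.aemeasurable hμ
  exact tendsto_integral_indicator_of_eventually_mem_iff hm
    (.of_forall fun q₂ => nullMeasurableSet_untreatedRegion hφ.measurable hψinv_snd (t, q₂))
    (hμ.mono fun v hv => eventually_mem_untreatedRegion_iff hφ hφinv hψinv hv)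

end UntreatedRegion

theorem stmt7_general {μ : Measure (ℝ × ℝ)} (hμ : ∀ᵐ v ∂μ, v.2 ∈ Ioo (0 : ℝ) 1)
    {m : ℝ × ℝ → ℝ} (hm : Integrable m μ) {φ φinv ψinv : ℝ → ℝ} (hφ : Monotone φ)
    (hφinv : RightInvOn φinv φ (Ioo 0 1)) (hψinv : MonotoneOn ψinv (Ioo 0 1)) {G₀ : ℝ × ℝ → ℝ}
    (hG₀ : ∀ q : ℝ × ℝ, q.1 ∈ Ioo (0 : ℝ) 1 → q.2 ∈ Ioo (0 : ℝ) 1 →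
      G₀ q = ∫ v, m v * (if q.1 ≤ v.1 then (1 : ℝ) else 0) *
        (if φ (ψinv v.2 - ψinv q.2 + φinv q.1) ≤ v.1 then (1 : ℝ) else 0) ∂μ)
    {q₁star : ℝ} (hq : q₁star ∈ Ioo (0 : ℝ) 1) :
    (∀ t ∈ Ioo (0 : ℝ) 1, Tendsto (fun q₂ => G₀ (t, q₂)) (𝓝[<] 1)
      (𝓝 (∫ v, m v * (if t ≤ v.1 then (1 : ℝ) else 0) ∂μ))) ∧
    (∀ g₀ : ℝ → ℝ, IntegrableOn g₀ (Ioo (0 : ℝ) 1) → ContinuousAt g₀ q₁star →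
      (∀ t ∈ Icc (0 : ℝ) 1,
        (∫ v, m v * (if t ≤ v.1 then (1 : ℝ) else 0) ∂μ) = ∫ s in t..(1 : ℝ), g₀ s) →
      HasDerivAt (fun t => ∫ v, m v * (if t ≤ v.1 then (1 : ℝ) else 0) ∂μ)
        (-(g₀ q₁star)) q₁star) := by
  refine ⟨fun t ht => ?_, fun g₀ hg hc hΦ => ?_⟩
  · have hlim := tendsto_integral_indicator_untreatedRegion hμ hm hφ (hφinv ht) hψinv
    simp only [indicator_untreatedRegion, indicator_setOf_eq_mul_ite] at hlim
    refine hlim.congr' ?_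
    filter_upwards [Ioo_mem_nhdsLT zero_lt_one] with q₂ hq₂ using (hG₀ (t, q₂) ht hq₂).symm
  · refine (hasDerivAt_integral_left_of_mem_Ioo hg hq hc).congr_of_eventuallyEq ?_
    filter_upwards [Icc_mem_nhds hq.1 hq.2] with t ht using hΦ t ht

/-- With `μ` a probability measure on ℝ² absolutely continuous
w.r.t. Lebesgue measure and supported in `[0,1]²`, `m` μ-integrable, `φ, ψ`
continuous strictly increasing bijections from ℝ onto `(0,1)` with inverses
`φinv, ψinv`, and
`G₀(q₁,q₂) = ∫ m(v)·𝟙{q₁ ≤ v₁}·𝟙{φ(ψ⁻¹(v₂) − ψ⁻¹(q₂) + φ⁻¹(q₁)) ≤ v₁} dμ`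
on `(0,1)²`, for `q₁* ∈ (0,1)`: (i) for every `t ∈ (0,1)`,
`G₀(t,q₂) → Φ₀(t) := ∫ m(v)·𝟙{t ≤ v₁} dμ` as `q₂ → 1⁻`; (ii) if `g₀` is
integrable on `(0,1)`, continuous at `q₁*`, with `Φ₀(t) = ∫ₜ¹ g₀` for all
`t ∈ [0,1]`, then `Φ₀` is differentiable at `q₁*` with derivative `−g₀(q₁*)`. -/
theorem stmt7 (μ : Measure (ℝ × ℝ)) [IsProbabilityMeasure μ]
    (habs : μ ≪ volume)
    (hsupp : μ ((Set.Icc (0 : ℝ) 1 ×ˢ Set.Icc (0 : ℝ) 1)ᶜ) = 0)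
    (m : ℝ × ℝ → ℝ) (hm : Integrable m μ)
    (φ ψ φinv ψinv : ℝ → ℝ)
    (hφc : Continuous φ) (hφm : StrictMono φ)
    (hφrange : Set.range φ = Set.Ioo (0 : ℝ) 1)
    (hφinv : ∀ x : ℝ, φinv (φ x) = x)
    (hψc : Continuous ψ) (hψm : StrictMono ψ)
    (hψrange : Set.range ψ = Set.Ioo (0 : ℝ) 1)
    (hψinv : ∀ x : ℝ, ψinv (ψ x) = x)
    (G₀ : ℝ × ℝ → ℝ)
    (hG₀ : ∀ q : ℝ × ℝ, q.1 ∈ Set.Ioo (0 : ℝ) 1 → q.2 ∈ Set.Ioo (0 : ℝ) 1 →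
      G₀ q = ∫ v, m v * (if q.1 ≤ v.1 then (1 : ℝ) else 0) *
        (if φ (ψinv v.2 - ψinv q.2 + φinv q.1) ≤ v.1 then (1 : ℝ) else 0) ∂μ)
    (q₁star : ℝ) (hq : q₁star ∈ Set.Ioo (0 : ℝ) 1) :
    (∀ t ∈ Set.Ioo (0 : ℝ) 1,
      Filter.Tendsto (fun q₂ => G₀ (t, q₂)) (nhdsWithin 1 (Set.Iio 1))
        (nhds (∫ v, m v * (if t ≤ v.1 then (1 : ℝ) else 0) ∂μ))) ∧
    (∀ g₀ : ℝ → ℝ, IntegrableOn g₀ (Set.Ioo (0 : ℝ) 1) →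
      ContinuousAt g₀ q₁star →
      (∀ t ∈ Set.Icc (0 : ℝ) 1,
        (∫ v, m v * (if t ≤ v.1 then (1 : ℝ) else 0) ∂μ) = ∫ s in t..(1 : ℝ), g₀ s) →
      HasDerivAt (fun t => ∫ v, m v * (if t ≤ v.1 then (1 : ℝ) else 0) ∂μ)
        (-(g₀ q₁star)) q₁star) := by
  have hμ : ∀ᵐ v ∂μ, v.2 ∈ Ioo (0 : ℝ) 1 :=
    ae_snd_mem_Ioo_of_absolutelyContinuous_prod habs
      (Eventually.mono (mem_ae_iff.2 hsupp) fun _ hv => hv.2)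
  have hφinv_right : RightInvOn φinv φ (Ioo 0 1) :=
    hφrange ▸ Function.LeftInverse.rightInvOn_range hφinv
  have hψinv_mono : MonotoneOn ψinv (Ioo 0 1) :=
    hψrange ▸ Function.monotoneOn_of_rightInvOn_of_mapsTo (hψm.monotone.monotoneOn univ)
      (Function.LeftInverse.rightInvOn_range hψinv) (mapsTo_univ _ _)
  exact stmt7_general hμ hm hφm.monotone hφinv_right hψinv_mono hG₀ hq
end

section
/- Let n ≥ 1. Then Fₙ is Cauchy continuous on (0,1)ⁿ: for every Cauchy sequence (aₘ) contained in (0,1)ⁿ, the sequence (Fₙ(aₘ)) is a Cauchy sequence in ℝ. In particular, for every q* ∈ (0,1)ⁿ and δ > 0, Fₙ restricted to Ñ_n(q*,δ) admits a unique continuous extension to the closure of Ñ_n(q*,δ). -/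
open Set MeasureTheory

/-- `Ñ_n(a,δ) = {x ∈ (0,1)ⁿ : ‖x − a‖ < δ}` with the Euclidean norm. -/
def nbhdE (n : ℕ) (a : EuclideanSpace ℝ (Fin n)) (δ : ℝ) :
    Set (EuclideanSpace ℝ (Fin n)) :=
  {x : EuclideanSpace ℝ (Fin n) |
    (∀ i : Fin n, x i ∈ Set.Ioo (0 : ℝ) 1) ∧ ‖x - a‖ < δ}

/-!
Off the finitely many hyperplanes `vᵢ = qᵢ`, which are `μ`-null, membership of `v` in the open
orthant `{v | ∀ i, vᵢ < xᵢ}` is locally constant in the corner `x` near `q`. Dominated convergence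
with bound `‖m‖` therefore makes `Fₙ` continuous on all of `ℝⁿ`. Completeness of `ℝⁿ` turns
continuity into Cauchy continuity, and `Fₙ` itself is the required extension.
-/

open Filter Topology

section Order

variable {α : Type*} [LinearOrder α] [TopologicalSpace α] [OrderClosedTopology α]

theorem eventually_const_lt_iff_of_ne {a b : α} (h : a ≠ b) : ∀ᶠ x in 𝓝 b, (a < x ↔ a < b) := by
  rcases h.lt_or_gt with hab | hba
  · filter_upwards [eventually_gt_nhds hab] with x hx using iff_of_true hx hab
  · filter_upwards [eventually_lt_nhds hba] with x hx using iff_of_false hx.not_gt hba.not_gt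

theorem eventually_forall_const_lt_iff_of_forall_ne {ι : Type*} [Finite ι] {p q : ι → α}
    (h : ∀ i, p i ≠ q i) : ∀ᶠ x in 𝓝 q, ((∀ i, p i < x i) ↔ ∀ i, p i < q i) := by
  have hcoord : ∀ᶠ x in 𝓝 q, ∀ i, (p i < x i ↔ p i < q i) :=
    eventually_all.2 fun i =>
      (continuousAt_apply i q).eventually (eventually_const_lt_iff_of_ne (h i))
  filter_upwards [hcoord] with x hx using forall_congr' hx

end Order

section SetIntegral

variable {X E : Type*} [MeasurableSpace X] {μ : Measure X} [NormedAddCommGroup E]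
  [NormedSpace ℝ E] {m : X → E}

theorem continuousAt_setIntegral_of_ae_eventually_mem_iff {Y : Type*} [TopologicalSpace Y]
    [FirstCountableTopology Y] {s : Y → Set X} {y₀ : Y} (hm : Integrable m μ)
    (hs : ∀ y, NullMeasurableSet (s y) μ)
    (h : ∀ᵐ x ∂μ, ∀ᶠ y in 𝓝 y₀, (x ∈ s y ↔ x ∈ s y₀)) :
    ContinuousAt (fun y => ∫ x in s y, m x ∂μ) y₀ := by
  simp only [← integral_indicator₀ (hs _)]
  refine continuousAt_of_dominated (bound := fun x => ‖m x‖)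
    (.of_forall fun y => hm.aestronglyMeasurable.indicator₀ (hs y))
    (.of_forall fun y => .of_forall fun x => norm_indicator_le_norm_self m x) hm.norm ?_
  filter_upwards [h] with x hx
  have hconst : (fun y => (s y).indicator m x) =ᶠ[𝓝 y₀] fun _ => (s y₀).indicator m x := by
    filter_upwards [hx] with y hy
    classical simp only [indicator_apply, hy]
  exact continuousAt_const.congr hconst.symm

variable {ι α : Type*} [Finite ι] [LinearOrder α] [TopologicalSpace α] [OrderClosedTopology α]
  [MeasurableSpace α] [OpensMeasurableSpace α] {f : X → ι → α}

theorem nullMeasurableSet_forall_lt_const (hf : ∀ i, AEMeasurable (fun x => f x i) μ)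
    (q : ι → α) : NullMeasurableSet {x | ∀ i, f x i < q i} μ := by
  rw [ofPred_forall]
  exact .iInter fun i => (hf i).nullMeasurableSet_preimage measurableSet_Iio

theorem continuousAt_setIntegral_forall_lt [FirstCountableTopology α] {q : ι → α}
    (hf : ∀ i, AEMeasurable (fun x => f x i) μ) (hm : Integrable m μ)
    (hq : ∀ i, ∀ᵐ x ∂μ, f x i ≠ q i) :
    ContinuousAt (fun q : ι → α => ∫ x in {x | ∀ i, f x i < q i}, m x ∂μ) q := by
  refine continuousAt_setIntegral_of_ae_eventually_mem_iff hm
    (nullMeasurableSet_forall_lt_const hf) ?_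
  filter_upwards [ae_all_iff.2 hq] with x hx
  exact eventually_forall_const_lt_iff_of_forall_ne hx

end SetIntegral

theorem ae_volume_euclideanSpace_apply_ne {ι : Type*} [Fintype ι] (i : ι) (c : ℝ) :
    ∀ᵐ v : EuclideanSpace ℝ ι, v i ≠ c :=
  (PiLp.volume_preserving_ofLp ι).quasiMeasurePreserving.ae
    (Measure.ae_eval_ne (fun _ => volume) i c)

theorem continuous_integral_ite_forall_lt {ι E : Type*} [Finite ι] [NormedAddCommGroup E]
    [NormedSpace ℝ E] {μ : Measure (EuclideanSpace ℝ ι)} {m : EuclideanSpace ℝ ι → E}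
    [∀ v q : EuclideanSpace ℝ ι, Decidable (∀ i, v i < q i)]
    (hμ : ∀ i c, ∀ᵐ v ∂μ, v i ≠ c) (hm : Integrable m μ) :
    Continuous fun q : EuclideanSpace ℝ ι => ∫ v, (if ∀ i, v i < q i then m v else 0) ∂μ := by
  have hf (i : ι) : AEMeasurable (fun v : EuclideanSpace ℝ ι => v.ofLp i) μ := by fun_prop
  have hcont : Continuous fun q : ι → ℝ => ∫ v in {v | ∀ i, v.ofLp i < q i}, m v ∂μ :=
    continuous_iff_continuousAt.2 fun q =>
      continuousAt_setIntegral_forall_lt hf hm fun i => hμ i (q i)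
  refine (hcont.comp (PiLp.continuous_ofLp 2 _)).congr fun q => ?_
  rw [Function.comp_apply, ← integral_indicator₀ (nullMeasurableSet_forall_lt_const hf _)]
  simp only [indicator_apply, mem_ofPred_eq]

theorem cauchySeq_comp_of_continuous {X Y β : Type*} [UniformSpace X] [CompleteSpace X]
    [UniformSpace Y] [Nonempty β] [SemilatticeSup β] {f : X → Y} (hf : Continuous f) {a : β → X}
    (ha : CauchySeq a) : CauchySeq fun k => f (a k) := by
  obtain ⟨l, hl⟩ := cauchySeq_tendsto_of_complete ha
  exact ((hf.tendsto l).comp hl).cauchySeq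

theorem stmt9_general {ι E : Type*} [Finite ι] [NormedAddCommGroup E] [NormedSpace ℝ E]
    [CompleteSpace E] {μ : Measure (EuclideanSpace ℝ ι)} (hμ : ∀ i c, ∀ᵐ v ∂μ, v i ≠ c)
    {m : EuclideanSpace ℝ ι → E} (hm : Integrable m μ)
    [∀ v q : EuclideanSpace ℝ ι, Decidable (∀ i, v i < q i)] {F : EuclideanSpace ℝ ι → E}
    (hF : ∀ q, F q = ∫ v, (if ∀ i, v i < q i then m v else 0) ∂μ) :
    (∀ a : ℕ → EuclideanSpace ℝ ι, CauchySeq a → CauchySeq fun k => F (a k)) ∧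
    ∀ s : Set (EuclideanSpace ℝ ι), ∃ fbar : EuclideanSpace ℝ ι → E,
      ContinuousOn fbar (closure s) ∧ (∀ x ∈ s, fbar x = F x) ∧
      ∀ g : EuclideanSpace ℝ ι → E, ContinuousOn g (closure s) → (∀ x ∈ s, g x = F x) →
        ∀ x ∈ closure s, g x = fbar x := by
  have hcont : Continuous F := (continuous_integral_ite_forall_lt hμ hm).congr fun q => (hF q).symm
  refine ⟨fun a => cauchySeq_comp_of_continuous hcont,
    fun s => ⟨F, hcont.continuousOn, fun _ _ => rfl, fun g hg hgF => ?_⟩⟩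
  exact EqOn.of_subset_closure hgF hg hcont.continuousOn subset_closure Subset.rfl

/-- With `μ` a probability measure on ℝⁿ (`n ≥ 1`) absolutely
continuous w.r.t. Lebesgue measure, `m` μ-integrable, and
`Fₙ(q) = ∫ m(v)·𝟙{vᵢ < qᵢ ∀i} dμ`: `Fₙ` is Cauchy continuous on `(0,1)ⁿ`,
and for every `q* ∈ (0,1)ⁿ` and `δ > 0`, `Fₙ` restricted to `Ñ_n(q*,δ)`
admits a unique continuous extension to the closure of `Ñ_n(q*,δ)`. -/
theorem stmt9 (n : ℕ) (hn : 1 ≤ n)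
    (μ : Measure (EuclideanSpace ℝ (Fin n))) [IsProbabilityMeasure μ]
    (habs : μ ≪ volume)
    (m : EuclideanSpace ℝ (Fin n) → ℝ) (hm : Integrable m μ)
    (F : EuclideanSpace ℝ (Fin n) → ℝ)
    (hF : ∀ q, F q = ∫ v, (if ∀ i : Fin n, v i < q i then m v else 0) ∂μ) :
    (∀ a : ℕ → EuclideanSpace ℝ (Fin n),
      (∀ k, ∀ i : Fin n, a k i ∈ Set.Ioo (0 : ℝ) 1) → CauchySeq a →
      CauchySeq (fun k => F (a k))) ∧
    (∀ qstar : EuclideanSpace ℝ (Fin n), (∀ i : Fin n, qstar i ∈ Set.Ioo (0 : ℝ) 1) →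
      ∀ δ : ℝ, 0 < δ →
      ∃ fbar : EuclideanSpace ℝ (Fin n) → ℝ,
        ContinuousOn fbar (closure (nbhdE n qstar δ)) ∧
        (∀ x ∈ nbhdE n qstar δ, fbar x = F x) ∧
        ∀ g : EuclideanSpace ℝ (Fin n) → ℝ,
          ContinuousOn g (closure (nbhdE n qstar δ)) →
          (∀ x ∈ nbhdE n qstar δ, g x = F x) →
          ∀ x ∈ closure (nbhdE n qstar δ), g x = fbar x) := by
  obtain ⟨hcauchy, hext⟩ := stmt9_general
    (fun i c => habs.ae_le (ae_volume_euclideanSpace_apply_ne i c)) hm hF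
  exact ⟨fun a _ => hcauchy a, fun qstar _ δ _ => hext (nbhdE n qstar δ)⟩
end

section
/- Let (Ω, 𝔉, P) be a probability space, let X, Y, W : Ω → ℝ be measurable, and suppose there is a measurable function φ : ℝ × ℝ → ℝ such that X = φ(Y, W) P-almost surely. Then the pushforward law of ω ↦ (X(ω), Y(ω), W(ω)) on ℝ³ is not absolutely continuous with respect to three-dimensional Lebesgue measure. (In particular, in the construction of Section 5.2 of Lee and Salanié (2018), where F⁻¹_{Ũ₀,₁}(V₀,₁) = F⁻¹_{Ũ₀,₂}(V₀,₂) − F⁻¹_{Ũ₁,₂}(V₁,₂) holds by construction, the vector (V₀,₁, V₀,₂, V₁,₂) cannot be absolutely continuous with support [0,1]³, so their Assumption 3.2 fails.) -/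
open Set MeasureTheory

section Graph

variable {α β : Type*} [MeasurableSpace α] [MeasurableSpace β] [MeasurableEq β] {f : α → β}

theorem measurableSet_setOf_fst_eq_comp_snd (hf : Measurable f) :
    MeasurableSet {p : β × α | p.1 = f p.2} :=
  measurableSet_eq_fun measurable_fst (hf.comp measurable_snd)

variable (μ : Measure β) (ν : Measure α) [SFinite μ] [SFinite ν] [NullSingletonClass μ]

theorem measure_prod_setOf_fst_eq_comp_snd_eq_zero (hf : Measurable f) :
    μ.prod ν {p : β × α | p.1 = f p.2} = 0 := by
  have slice_eq_zero (a : α) : μ ((·, a) ⁻¹' {p : β × α | p.1 = f p.2}) = 0 :=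
    measure_singleton (f a)
  rw [Measure.prod_apply_symm (measurableSet_setOf_fst_eq_comp_snd hf)]
  simp only [slice_eq_zero, lintegral_zero]

theorem mutuallySingular_prod_of_ae_fst_eq_comp_snd (hf : Measurable f) {ρ : Measure (β × α)}
    (hρ : ∀ᵐ p ∂ρ, p.1 = f p.2) : ρ ⟂ₘ μ.prod ν :=
  .mk (ae_iff.mp hρ) (measure_prod_setOf_fst_eq_comp_snd_eq_zero μ ν hf) (compl_union_self _).ge

theorem stmt12_general {Ω : Type*} [MeasurableSpace Ω] (P : Measure Ω) [NeZero P]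
    {X : Ω → β} {Z : Ω → α} (hZ : AEMeasurable Z P) (hf : Measurable f)
    (hXeq : ∀ᵐ ω ∂P, X ω = f (Z ω)) :
    ¬ P.map (fun ω => (X ω, Z ω)) ≪ μ.prod ν := by
  intro hac
  have hX : AEMeasurable X P := (hf.comp_aemeasurable hZ).congr (Filter.EventuallyEq.symm hXeq)
  have hXZ : AEMeasurable (fun ω => (X ω, Z ω)) P := hX.prodMk hZ
  have law_on_graph : ∀ᵐ p ∂P.map (fun ω => (X ω, Z ω)), p.1 = f p.2 :=
    (ae_map_iff hXZ (measurableSet_setOf_fst_eq_comp_snd hf)).mpr hXeq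
  have law_eq_zero : P.map (fun ω => (X ω, Z ω)) = 0 :=
    Measure.eq_zero_of_absolutelyContinuous_of_mutuallySingular hac
      (mutuallySingular_prod_of_ae_fst_eq_comp_snd μ ν hf law_on_graph)
  exact NeZero.ne P ((Measure.map_eq_zero_iff hXZ).mp law_eq_zero)

end Graph

/-- If `(Ω, 𝔉, P)` is a probability space, `X, Y, W : Ω → ℝ`
are measurable, and `X = φ(Y, W)` P-a.s. for a measurable `φ : ℝ × ℝ → ℝ`,
then the law of `ω ↦ (X ω, Y ω, W ω)` on ℝ³ is not absolutely continuous
with respect to three-dimensional Lebesgue measure. -/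
theorem stmt12 {Ω : Type*} [MeasurableSpace Ω]
    (P : Measure Ω) [IsProbabilityMeasure P]
    (X Y W : Ω → ℝ) (hX : Measurable X) (hY : Measurable Y) (hW : Measurable W)
    (φ : ℝ × ℝ → ℝ) (hφ : Measurable φ)
    (hXeq : ∀ᵐ ω ∂P, X ω = φ (Y ω, W ω)) :
    ¬ (P.map (fun ω => (X ω, Y ω, W ω)) ≪ (volume : Measure (ℝ × ℝ × ℝ))) :=
  stmt12_general volume volume P (hY.prodMk hW).aemeasurable hφ hXeq
end
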